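/- Let Q be a Euclidean quiver and d a dimension vector with canonical decomposition d = d̂ ⊕ δ^s with s ≥ 1, where δ is the null root and d̂ is prehomogeneous. Set V = M(d̂). Then the semi-stable subcategory rep(Q)_d equals V^⊥ ∩ Reg, where Reg is the additive subcategory of regular representations. -/

import Mathlib

open Matrix BigOperators

/-- A finite quiver: `n` vertices, `a` arrows with source and target maps. -/
structure FinQuiver where
  n : ℕ
  a : ℕ
  src : Fin a → Fin n
  tgt : Fin a → Fin n

namespace FinQuiver

/-- A finite quiver is acyclic iff it admits a topological ordering of vertices. -/
def Acyclic (Q : FinQuiver) : Prop :=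
  ∃ h : Fin Q.n → ℕ, ∀ x, h (Q.src x) < h (Q.tgt x)

/-- Connectivity of the underlying graph. -/
def Connected (Q : FinQuiver) : Prop :=
  ∀ S : Finset (Fin Q.n), S.Nonempty → S ≠ Finset.univ →
    ∃ x, (Q.src x ∈ S ∧ Q.tgt x ∉ S) ∨ (Q.tgt x ∈ S ∧ Q.src x ∉ S)

/-- The Euler form ⟨d,e⟩ = Σ_i d_i e_i − Σ_{α : i → j} d_i e_j. -/
def euler (Q : FinQuiver) (d e : Fin Q.n → ℤ) : ℤ :=
  (∑ i, d i * e i) - ∑ x, d (Q.src x) * e (Q.tgt x)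

/-- A (possibly disconnected) Dynkin quiver: acyclic with positive definite Tits form. -/
def IsDynkin (Q : FinQuiver) : Prop :=
  Q.Acyclic ∧ ∀ d : Fin Q.n → ℤ, d ≠ 0 → 0 < Q.euler d d

/-- `δ` is the null root: positive, isotropic, and every isotropic vector is an
integer multiple of `δ`. -/
def IsNullRoot (Q : FinQuiver) (δ : Fin Q.n → ℤ) : Prop :=
  (∀ i, 0 < δ i) ∧ Q.euler δ δ = 0 ∧
    ∀ d : Fin Q.n → ℤ, Q.euler d d = 0 → ∃ m : ℤ, d = m • δ

/-- A Euclidean (affine) quiver: connected, acyclic, positive semidefinite Tits form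
with a null root. -/
def IsEuclidean (Q : FinQuiver) : Prop :=
  Q.Acyclic ∧ Q.Connected ∧ (∀ d, 0 ≤ Q.euler d d) ∧ ∃ δ, Q.IsNullRoot δ

end FinQuiver

/-- A finite-dimensional representation of `Q` over `k`: dimensions at each vertex,
and a matrix for each arrow. -/
structure QRep (k : Type) [Field k] (Q : FinQuiver) where
  d : Fin Q.n → ℕ
  mat : ∀ x : Fin Q.a, Matrix (Fin (d (Q.tgt x))) (Fin (d (Q.src x))) k

namespace QRep

variable {k : Type} [Field k] {Q : FinQuiver}

/-- The dimension vector of a representation, as an integer vector. -/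
def dimVec (M : QRep k Q) : Fin Q.n → ℤ := fun i => (M.d i : ℤ)

/-- The space of morphisms of representations `M → N`. -/
def homSpace (M N : QRep k Q) :
    Submodule k (∀ i, Matrix (Fin (N.d i)) (Fin (M.d i)) k) where
  carrier := {f | ∀ x, f (Q.tgt x) * M.mat x = N.mat x * f (Q.src x)}
  add_mem' := by
    intro f g hf hg x
    simp only [Pi.add_apply, Matrix.add_mul, Matrix.mul_add, hf x, hg x]
  zero_mem' := by intro x; simp
  smul_mem' := by
    intro c f hf x
    simp only [Pi.smul_apply, Matrix.smul_mul, Matrix.mul_smul, hf x]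

/-- The standard map whose kernel is `Hom(M,N)` and cokernel is `Ext¹(M,N)`. -/
def extMap (M N : QRep k Q) :
    (∀ i, Matrix (Fin (N.d i)) (Fin (M.d i)) k) →ₗ[k]
    (∀ x : Fin Q.a, Matrix (Fin (N.d (Q.tgt x))) (Fin (M.d (Q.src x))) k) where
  toFun f := fun x => f (Q.tgt x) * M.mat x - N.mat x * f (Q.src x)
  map_add' := by
    intro f g; funext x
    simp only [Pi.add_apply, Matrix.add_mul, Matrix.mul_add]
    abel
  map_smul' := by
    intro c f; funext x
    simp only [Pi.smul_apply, Matrix.smul_mul, Matrix.mul_smul, RingHom.id_apply,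
      smul_sub]

/-- dim_k Hom(M,N). -/
noncomputable def homDim (M N : QRep k Q) : ℕ :=
  Module.finrank k (homSpace M N)

/-- dim_k Ext¹(M,N), defined as the dimension of the cokernel of `extMap`. -/
noncomputable def extDim (M N : QRep k Q) : ℕ :=
  Module.finrank k
    ((∀ x : Fin Q.a, Matrix (Fin (N.d (Q.tgt x))) (Fin (M.d (Q.src x))) k) ⧸
      LinearMap.range (extMap M N))

/-- Isomorphism of representations. -/
def IsoRep (M N : QRep k Q) : Prop :=
  ∃ f ∈ homSpace M N, ∀ i, Function.Bijective (Matrix.mulVecLin (f i))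

/-- `L` is (the source of a monomorphism into) a subrepresentation of `M`. -/
def IsSubrep (L M : QRep k Q) : Prop :=
  ∃ f ∈ homSpace L M, ∀ i, Function.Injective (Matrix.mulVecLin (f i))

/-- `L` is a direct summand of `M` (split monomorphism with retraction). -/
def IsSummand (L M : QRep k Q) : Prop :=
  ∃ f ∈ homSpace L M, ∃ g ∈ homSpace M L, ∀ i, g i * f i = 1

/-- `M` is indecomposable: nonzero, and its endomorphism ring has no nontrivial
idempotents. -/
def Indec (M : QRep k Q) : Prop :=
  (∃ i, M.d i ≠ 0) ∧
    ∀ f ∈ homSpace M M, (∀ i, f i * f i = f i) → f = 0 ∨ f = 1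

/-- An exceptional representation: indecomposable and rigid. -/
def Exceptional (M : QRep k Q) : Prop :=
  Indec M ∧ extDim M M = 0

/-- `(f, g)` form a short exact sequence `0 → A → B → C → 0` of representations. -/
def IsSES (A B C : QRep k Q)
    (f : ∀ i, Matrix (Fin (B.d i)) (Fin (A.d i)) k)
    (g : ∀ i, Matrix (Fin (C.d i)) (Fin (B.d i)) k) : Prop :=
  f ∈ homSpace A B ∧ g ∈ homSpace B C ∧
    ∀ i, Function.Injective (Matrix.mulVecLin (f i)) ∧
      Function.Surjective (Matrix.mulVecLin (g i)) ∧
      LinearMap.range (Matrix.mulVecLin (f i)) = LinearMap.ker (Matrix.mulVecLin (g i))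

/-- A thick (= abelian and extension-closed, since rep(Q) is hereditary) full
subcategory: closed under isomorphism, direct summands and two-out-of-three for
short exact sequences. -/
def Thick (P : QRep k Q → Prop) : Prop :=
  (∀ M N, IsoRep M N → P M → P N) ∧
  (∀ L M, IsSummand L M → P M → P L) ∧
  (∀ A B C f g, IsSES A B C f g →
    ((P A → P B → P C) ∧ (P A → P C → P B) ∧ (P B → P C → P A)))

/-- `P` is the smallest thick subcategory containing `S`. -/
def GeneratedBy (P : QRep k Q → Prop) (S : Set (QRep k Q)) : Prop :=
  Thick P ∧ (∀ X ∈ S, P X) ∧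
    ∀ P' : QRep k Q → Prop, Thick P' → (∀ X ∈ S, P' X) → ∀ M, P M → P' M

/-- An exceptional sequence. -/
def ExcSeq {r : ℕ} (E : Fin r → QRep k Q) : Prop :=
  (∀ i, Exceptional (E i) ∧ homDim (E i) (E i) = 1) ∧
    ∀ i j : Fin r, i < j → homDim (E i) (E j) = 0 ∧ extDim (E i) (E j) = 0

/-- King's criterion for `⟨d,−⟩`-semi-stability. -/
def SemiStable (d : Fin Q.n → ℤ) (M : QRep k Q) : Prop :=
  Q.euler d M.dimVec = 0 ∧ ∀ L : QRep k Q, IsSubrep L M → Q.euler d L.dimVec ≤ 0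

/-- `M` is regular: every indecomposable summand pairs to zero with the null root. -/
def RegularRep (δ : Fin Q.n → ℤ) (M : QRep k Q) : Prop :=
  ∀ L, IsSummand L M → Indec L → Q.euler δ L.dimVec = 0

/-- `M` is in the right perpendicular category of `V`. -/
def RPerp (V M : QRep k Q) : Prop := homDim V M = 0 ∧ extDim V M = 0

/-- `M` is in the left perpendicular category of `V`. -/
def LPerp (V M : QRep k Q) : Prop := homDim M V = 0 ∧ extDim M V = 0

/-- `P` is a projective representation (Ext¹(P,−) = 0). -/
def IsProjRep (P : QRep k Q) : Prop := ∀ M : QRep k Q, extDim P M = 0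

end QRep

/-- `α` is a Schur root: the dimension vector of an indecomposable representation
with trivial endomorphism ring. -/
def IsSchurRoot (k : Type) [Field k] (Q : FinQuiver) (α : Fin Q.n → ℤ) : Prop :=
  ∃ M : QRep k Q, M.dimVec = α ∧ QRep.Indec M ∧ QRep.homDim M M = 1

/-- `ext(α,β) = 0`: some representations of these dimension vectors have no
extensions. -/
def ExtZero (k : Type) [Field k] (Q : FinQuiver) (α β : Fin Q.n → ℤ) : Prop :=
  ∃ M N : QRep k Q, M.dimVec = α ∧ N.dimVec = β ∧ QRep.extDim M N = 0

/-- Kac's characterization of the canonical decomposition: `c` is the canonical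
decomposition of `d` iff the entries sum to `d`, are Schur roots, and are pairwise
ext-orthogonal. -/
def IsCanonDecomp (k : Type) [Field k] (Q : FinQuiver) (d : Fin Q.n → ℤ)
    (c : List (Fin Q.n → ℤ)) : Prop :=
  c.sum = d ∧ (∀ α ∈ c, IsSchurRoot k Q α) ∧
    ∀ i j : Fin c.length, i ≠ j → ExtZero k Q (c.get i) (c.get j)

/-!
The representations satisfying King's inequality for the weight `δ` are the torsion-free class of a
torsion pair. A brick `M` of dimension `δ` has `⟨δ, δ⟩ = 0`, so it deforms to an `N` of dimension
`δ` with `Ext¹(M, N) = 0`, which replaces the mouths of two different homogeneous tubes. Since `δ`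
is in the radical of the Euler form, filtering by images of maps to `M` and from `N` gives
`Ext¹(X, Y) = 0` whenever `X` is torsion-free and `Y` is torsion. Hence the canonical sequence of an
indecomposable splits, and the regular representations are exactly the `δ`-semi-stable ones.

The summands of `d̂` are `δ`-semi-stable as they are `Ext`-orthogonal to `δ`, and by rigidity so is
`V`. For the weight `d = dim V + s δ`, a nonzero image of `V` has positive weight as `V` is rigid
and `δ`-semi-stable, and so does the `δ`-torsion part of a representation, because
`Ext¹(V, torsion) = 0`. So `d`-semi-stability means that `Hom(V, X) = 0`, that `X` is
`δ`-semi-stable, and, since then `⟨dim V, dim X⟩ = 0`, that `Ext¹(V, X) = 0`.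
-/

open Module Function

/-! ### Linear algebra -/

section

variable {R V W U T : Type*} [CommRing R] [AddCommGroup V] [Module R V] [AddCommGroup W]
  [Module R W] [AddCommGroup U] [Module R U] [AddCommGroup T] [Module R T]

theorem exists_comp_eq_of_exact_of_injective {ι : V →ₗ[R] W} {π : W →ₗ[R] U} (hι : Injective ι)
    (hex : Exact ι π) {f : T →ₗ[R] W} (hf : π ∘ₗ f = 0) : ∃ g : T →ₗ[R] V, ι ∘ₗ g = f :=
  ⟨f.codRestrictOfInjective ι hι fun t => (hex (f t)).1 (LinearMap.congr_fun hf t),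
    f.codRestrictOfInjective_comp ι hι _⟩

theorem exists_comp_eq_of_exact_of_surjective {ι : V →ₗ[R] W} {π : W →ₗ[R] U}
    (hπ : Surjective π) (hex : Exact ι π) {f : W →ₗ[R] T} (hf : f ∘ₗ ι = 0) :
    ∃ g : U →ₗ[R] T, g ∘ₗ π = f :=
  (LinearMap.exact_lcomp_of_exact_of_surjective T hex hπ f).1 hf

end

section

variable {k E F G : Type*} [Field k] [AddCommGroup E] [Module k E] [AddCommGroup F] [Module k F]
  [AddCommGroup G] [Module k G]

theorem exists_comp_eq_of_injective {ι : E →ₗ[k] F} (hι : Injective ι) (f : E →ₗ[k] G) :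
    ∃ g : F →ₗ[k] G, g ∘ₗ ι = f :=
  have ⟨r, hr⟩ := ι.exists_leftInverse_of_injective (LinearMap.ker_eq_bot.2 hι)
  ⟨f ∘ₗ r, by rw [LinearMap.comp_assoc, hr, LinearMap.comp_id]⟩

/-- With `P` a projection onto `ker f`, the map `f + g P` is an isomorphism `e`. If `t ≠ 0` and
`(f + t g) v = 0`, then `f v` lies in the eigenspace of `f e⁻¹ g e⁻¹` for `-t⁻¹`. -/
theorem exists_injective_add_smul [Infinite k] [FiniteDimensional k E] [FiniteDimensional k F]
    (hEF : finrank k E = finrank k F) (f g : E →ₗ[k] F)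
    (h : ∀ v, f v = 0 → g v ∈ LinearMap.range f → v = 0) :
    ∃ t : k, Injective (f + t • g) := by
  obtain ⟨p, hp⟩ := (LinearMap.ker f).subtype.exists_leftInverse_of_injective
    (Submodule.ker_subtype _)
  let P : E →ₗ[k] E := (LinearMap.ker f).subtype ∘ₗ p
  have fP (v : E) : f (P v) = 0 := (p v).2
  have P_of_ker {v : E} (hv : f v = 0) : P v = v :=
    congr_arg Subtype.val (LinearMap.congr_fun hp ⟨v, hv⟩)
  have hinj : Injective (f + g ∘ₗ P) := by
    refine (injective_iff_map_eq_zero _).2 fun v hv => ?_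
    have hPv : P v = 0 := h _ (fP v) ⟨-v, by rw [map_neg]; exact neg_eq_of_add_eq_zero_right hv⟩
    exact (P_of_ker (by simpa [hPv] using hv)).symm.trans hPv
  let e : E ≃ₗ[k] F := LinearMap.linearEquivOfInjective _ hinj hEF
  have e_apply (v : E) : e v = f v + g (P v) := rfl
  have e_symm_f (v : E) : e.symm (f v) = v - P v := by
    simp [e.symm_apply_eq, e_apply, fP, P_of_ker (fP v)]
  have e_symm_gP (v : E) : e.symm (g (P v)) = P v := by
    simp [e.symm_apply_eq, e_apply, fP, P_of_ker (fP v)]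
  let c : End k F := f ∘ₗ e.symm.toLinearMap ∘ₗ g ∘ₗ e.symm.toLinearMap
  obtain ⟨μ, hμ⟩ := (c.finite_hasEigenvalue.union (Set.finite_singleton 0)).exists_notMem
  obtain ⟨hμc, hμ0⟩ : ¬c.HasEigenvalue μ ∧ μ ≠ 0 := by simpa [and_comm] using hμ
  refine ⟨-μ⁻¹, (injective_iff_map_eq_zero _).2 fun v hv => ?_⟩
  have hgv : g v = μ • f v := by
    have : f v = μ⁻¹ • g v := by simpa [add_neg_eq_zero] using hv
    rw [this, smul_inv_smul₀ hμ0]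
  have hcf : c (f v) = μ • f v := by simp [c, e_symm_f, e_symm_gP, fP, hgv]
  have hfv : f v = 0 := by
    by_contra hfv
    exact hμc (End.hasEigenvalue_of_hasEigenvector ⟨End.mem_eigenspace_iff.2 hcf, hfv⟩)
  exact h v hfv (by simp [hgv, hfv])

end

/-! ### The Euler form -/

namespace FinQuiver

variable {Q : FinQuiver}

theorem euler_add_left (d e f : Fin Q.n → ℤ) : Q.euler (d + e) f = Q.euler d f + Q.euler e f := by
  simp only [euler, Pi.add_apply, add_mul, Finset.sum_add_distrib]
  ring

theorem euler_add_right (d e f : Fin Q.n → ℤ) : Q.euler d (e + f) = Q.euler d e + Q.euler d f := by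
  simp only [euler, Pi.add_apply, mul_add, Finset.sum_add_distrib]
  ring

theorem euler_smul_left (m : ℤ) (d e : Fin Q.n → ℤ) : Q.euler (m • d) e = m * Q.euler d e := by
  simp only [euler, Pi.smul_apply, smul_eq_mul, mul_assoc, ← Finset.mul_sum, mul_sub]

theorem euler_smul_right (m : ℤ) (d e : Fin Q.n → ℤ) : Q.euler d (m • e) = m * Q.euler d e := by
  simp only [euler, Pi.smul_apply, smul_eq_mul, mul_left_comm _ m, ← Finset.mul_sum, mul_sub]

theorem euler_add_smul_left (d e f : Fin Q.n → ℤ) (s : ℤ) :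
    Q.euler (d + s • e) f = Q.euler d f + s * Q.euler e f := by
  rw [euler_add_left, euler_smul_left]

theorem euler_zero_right (d : Fin Q.n → ℤ) : Q.euler d 0 = 0 := by
  simp [euler]

/-- `δ` lies in the radical of the symmetrized Euler form. -/
def IsRadical (Q : FinQuiver) (δ : Fin Q.n → ℤ) : Prop :=
  ∀ e, Q.euler e δ = -Q.euler δ e

theorem IsRadical.euler_self {δ : Fin Q.n → ℤ} (hδ : Q.IsRadical δ) : Q.euler δ δ = 0 := by
  linarith [hδ δ]

/-- The Tits form of `n • δ + e` is `n * (⟨δ, e⟩ + ⟨e, δ⟩) + ⟨e, e⟩`, and an affine function of `n`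
that is nonnegative on `ℤ` is constant. -/
theorem isRadical_of_nonneg (hQ : ∀ e, 0 ≤ Q.euler e e) {δ : Fin Q.n → ℤ}
    (hδ : Q.euler δ δ = 0) : Q.IsRadical δ := by
  intro e
  have tits (n : ℤ) : 0 ≤ n * (Q.euler δ e + Q.euler e δ) + Q.euler e e := by
    have h := hQ (n • δ + e)
    simp only [euler_add_left, euler_add_right, euler_smul_left, euler_smul_right, hδ] at h
    linarith
  by_contra hne
  have h₁ := tits (Q.euler e e + 1)
  have h₂ := tits (-(Q.euler e e + 1))
  rcases lt_trichotomy (Q.euler δ e + Q.euler e δ) 0 with h | h | h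
  · nlinarith [hQ e]
  · exact hne (by linarith)
  · nlinarith [hQ e]

end FinQuiver

/-- A finite-dimensional representation of `Q` with arbitrary vector spaces, rather than the
coordinate spaces of `QRep`, at the vertices: kernels, images and quotients are again of this
form. -/
structure LinRep (k : Type) [Field k] (Q : FinQuiver) where
  obj : Fin Q.n → Type
  [addCommGroup : ∀ i, AddCommGroup (obj i)]
  [module : ∀ i, Module k (obj i)]
  [finite : ∀ i, FiniteDimensional k (obj i)]
  map : ∀ x, obj (Q.src x) →ₗ[k] obj (Q.tgt x)

namespace LinRep

attribute [instance] LinRep.addCommGroup LinRep.module LinRep.finite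

variable {k : Type} [Field k] {Q : FinQuiver} {A B C I X Y Z : LinRep k Q}

/-- The dimension vector. -/
noncomputable def dimVec (X : LinRep k Q) : Fin Q.n → ℤ := fun i => finrank k (X.obj i)

/-- The total dimension, on which the inductions below run. -/
noncomputable def dim (X : LinRep k Q) : ℕ := ∑ i, finrank k (X.obj i)

theorem dimVec_nonneg (X : LinRep k Q) : 0 ≤ X.dimVec := fun _ => Int.natCast_nonneg _

theorem natCast_dim (X : LinRep k Q) : (X.dim : ℤ) = ∑ i, X.dimVec i := Nat.cast_sum ..

theorem dimVec_eq_zero_iff : X.dimVec = 0 ↔ ∀ i, Subsingleton (X.obj i) := by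
  simp [funext_iff, dimVec, finrank_zero_iff]

theorem dim_eq_zero_iff : X.dim = 0 ↔ X.dimVec = 0 := by
  simp [dim, dimVec, funext_iff]

/-! ### Morphisms and extensions -/

/-- Families of linear maps at the vertices: the degree `0` term of the complex computing
`Hom(X, Y)` and `Ext¹(X, Y)`. -/
abbrev VertexMaps (X Y : LinRep k Q) : Type := ∀ i, X.obj i →ₗ[k] Y.obj i

/-- Families of linear maps along the arrows: the degree `1` term of the complex computing
`Hom(X, Y)` and `Ext¹(X, Y)`. -/
abbrev ArrowMaps (X Y : LinRep k Q) : Type := ∀ x, X.obj (Q.src x) →ₗ[k] Y.obj (Q.tgt x)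

/-- The differential, with kernel `Hom(X, Y)` and cokernel `Ext¹(X, Y)`. -/
def coboundary (X Y : LinRep k Q) : VertexMaps X Y →ₗ[k] ArrowMaps X Y where
  toFun f x := f (Q.tgt x) ∘ₗ X.map x - Y.map x ∘ₗ f (Q.src x)
  map_add' f g := by
    ext x v
    simp only [Pi.add_apply, LinearMap.sub_apply, LinearMap.add_apply, LinearMap.comp_apply,
      map_add]
    abel
  map_smul' c f := by
    ext x v
    simp [smul_sub]

/-- `f` is a morphism of representations. -/
def IsHom (f : VertexMaps X Y) : Prop :=
  ∀ x, f (Q.tgt x) ∘ₗ X.map x = Y.map x ∘ₗ f (Q.src x)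

/-- `Hom(X, Y) = 0`. -/
def HomVanish (X Y : LinRep k Q) : Prop := Injective (coboundary X Y)

/-- `Ext¹(X, Y) = 0`. -/
def ExtVanish (X Y : LinRep k Q) : Prop := Surjective (coboundary X Y)

theorem coboundary_eq_zero_iff {f : VertexMaps X Y} : coboundary X Y f = 0 ↔ IsHom f := by
  simp [funext_iff, coboundary, sub_eq_zero, IsHom]

theorem homVanish_iff : HomVanish X Y ↔ ∀ f : VertexMaps X Y, IsHom f → f = 0 := by
  simp_rw [HomVanish, injective_iff_map_eq_zero, coboundary_eq_zero_iff]

theorem isHom_id : IsHom (X := X) fun _ => LinearMap.id := fun _ => rfl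

theorem IsHom.comp {g : VertexMaps Y Z} {f : VertexMaps X Y} (hg : IsHom g) (hf : IsHom f) :
    IsHom fun i => g i ∘ₗ f i := fun x => by
  rw [LinearMap.comp_assoc, hf x, ← LinearMap.comp_assoc, hg x, LinearMap.comp_assoc]

theorem IsHom.sub {f g : VertexMaps X Y} (hf : IsHom f) (hg : IsHom g) : IsHom (f - g) := by
  rw [← coboundary_eq_zero_iff] at *
  rw [map_sub, hf, hg, sub_zero]

theorem IsHom.apply_map {f : VertexMaps X Y} (hf : IsHom f) (x : Fin Q.a)
    (v : X.obj (Q.src x)) : f (Q.tgt x) (X.map x v) = Y.map x (f (Q.src x) v) :=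
  LinearMap.congr_fun (hf x) v

theorem coboundary_comp_isHom (g : VertexMaps Y Z) {f : VertexMaps X Y} (hf : IsHom f) :
    coboundary X Z (fun i => g i ∘ₗ f i) = fun x => coboundary Y Z g x ∘ₗ f (Q.src x) := by
  ext x v
  simp [coboundary, hf.apply_map]

theorem coboundary_isHom_comp {g : VertexMaps Y Z} (hg : IsHom g) (f : VertexMaps X Y) :
    coboundary X Z (fun i => g i ∘ₗ f i) = fun x => g (Q.tgt x) ∘ₗ coboundary X Y f x := by
  ext x v
  simp [coboundary, hg.apply_map]

theorem IsHom.of_comp_injective {g : VertexMaps Y Z} {f : VertexMaps X Y} (hg : IsHom g)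
    (hinj : ∀ i, Injective (g i)) (hgf : IsHom fun i => g i ∘ₗ f i) : IsHom f := by
  rw [← coboundary_eq_zero_iff, coboundary_isHom_comp hg] at hgf
  rw [← coboundary_eq_zero_iff]
  ext x v
  exact (injective_iff_map_eq_zero _).1 (hinj _) _ (LinearMap.congr_fun (congr_fun hgf x) v)

theorem finrank_vertexMaps_sub_finrank_arrowMaps (X Y : LinRep k Q) :
    (finrank k (VertexMaps X Y) : ℤ) - finrank k (ArrowMaps X Y) =
      Q.euler X.dimVec Y.dimVec := by
  simp [finrank_pi_fintype, FinQuiver.euler, dimVec, finrank_linearMap]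

theorem HomVanish.euler_nonpos (h : HomVanish X Y) : Q.euler X.dimVec Y.dimVec ≤ 0 := by
  have := LinearMap.finrank_le_finrank_of_injective h
  rw [← finrank_vertexMaps_sub_finrank_arrowMaps]
  lia

theorem ExtVanish.euler_nonneg (h : ExtVanish X Y) : 0 ≤ Q.euler X.dimVec Y.dimVec := by
  have := LinearMap.finrank_le_finrank_of_surjective h
  rw [← finrank_vertexMaps_sub_finrank_arrowMaps]
  lia

theorem HomVanish.extVanish (h : HomVanish X Y) (he : 0 ≤ Q.euler X.dimVec Y.dimVec) :
    ExtVanish X Y := by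
  have := LinearMap.finrank_le_finrank_of_injective h
  rw [← finrank_vertexMaps_sub_finrank_arrowMaps] at he
  exact (LinearMap.injective_iff_surjective_of_finrank_eq_finrank (by lia)).1 h

theorem ExtVanish.homVanish (h : ExtVanish X Y) (he : Q.euler X.dimVec Y.dimVec ≤ 0) :
    HomVanish X Y := by
  have := LinearMap.finrank_le_finrank_of_surjective h
  rw [← finrank_vertexMaps_sub_finrank_arrowMaps] at he
  exact (LinearMap.injective_iff_surjective_of_finrank_eq_finrank (by lia)).2 h

theorem ExtVanish.of_dimVec_right_eq_zero (hY : Y.dimVec = 0) : ExtVanish X Y := fun _ =>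
  have := dimVec_eq_zero_iff.1 hY
  ⟨0, Subsingleton.elim _ _⟩

/-! ### Short exact sequences -/

/-- `A` embeds into `X`. -/
def IsSub (A X : LinRep k Q) : Prop :=
  ∃ f : VertexMaps A X, IsHom f ∧ ∀ i, Injective (f i)

/-- `C` is a quotient of `X`. -/
def IsQuot (X C : LinRep k Q) : Prop :=
  ∃ f : VertexMaps X C, IsHom f ∧ ∀ i, Surjective (f i)

/-- `0 → A → X → C → 0` is a short exact sequence with maps `f` and `g`. -/
structure IsShortExact (f : VertexMaps A X) (g : VertexMaps X C) : Prop where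
  isHom_left : IsHom f
  isHom_right : IsHom g
  injective (i : Fin Q.n) : Injective (f i)
  surjective (i : Fin Q.n) : Surjective (g i)
  exact (i : Fin Q.n) : Exact (f i) (g i)

/-- There is a short exact sequence `0 → A → X → C → 0`. -/
def ShortExact (A X C : LinRep k Q) : Prop :=
  ∃ (f : VertexMaps A X) (g : VertexMaps X C), IsShortExact f g

theorem IsSub.refl (X : LinRep k Q) : IsSub X X := ⟨_, isHom_id, fun _ => injective_id⟩

theorem IsQuot.refl (X : LinRep k Q) : IsQuot X X := ⟨_, isHom_id, fun _ => surjective_id⟩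

theorem IsSub.trans : IsSub A B → IsSub B C → IsSub A C
  | ⟨_, hf, hf'⟩, ⟨_, hg, hg'⟩ => ⟨_, hg.comp hf, fun i => (hg' i).comp (hf' i)⟩

theorem IsQuot.trans : IsQuot A B → IsQuot B C → IsQuot A C
  | ⟨_, hf, hf'⟩, ⟨_, hg, hg'⟩ => ⟨_, hg.comp hf, fun i => (hg' i).comp (hf' i)⟩

theorem ShortExact.isSub : ShortExact A X C → IsSub A X
  | ⟨f, _, h⟩ => ⟨f, h.isHom_left, h.injective⟩

theorem ShortExact.isQuot : ShortExact A X C → IsQuot X C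
  | ⟨_, g, h⟩ => ⟨g, h.isHom_right, h.surjective⟩

theorem IsSub.dimVec_le : IsSub A X → A.dimVec ≤ X.dimVec
  | ⟨_, _, hf⟩, i => Nat.cast_le.2 (LinearMap.finrank_le_finrank_of_injective (hf i))

theorem ShortExact.dimVec_eq : ShortExact A X C → X.dimVec = A.dimVec + C.dimVec := by
  rintro ⟨f, g, h⟩
  ext i
  have := (g i).finrank_range_add_finrank_ker
  rw [(h.exact i).linearMap_ker_eq, LinearMap.finrank_range_of_inj (h.injective i),
    LinearMap.range_eq_top.2 (h.surjective i), finrank_top] at this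
  simp only [Pi.add_apply, dimVec]
  lia

theorem ShortExact.euler_right (h : ShortExact A X C) (d : Fin Q.n → ℤ) :
    Q.euler d X.dimVec = Q.euler d A.dimVec + Q.euler d C.dimVec := by
  rw [h.dimVec_eq, FinQuiver.euler_add_right]

theorem ShortExact.dim_eq (h : ShortExact A X C) : X.dim = A.dim + C.dim := by
  zify
  simp_rw [natCast_dim, h.dimVec_eq, Pi.add_apply, Finset.sum_add_distrib]

theorem ShortExact.dim_left_lt (h : ShortExact A X C) (hC : C.dimVec ≠ 0) : A.dim < X.dim := by
  have := mt dim_eq_zero_iff.1 hC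
  have := h.dim_eq
  lia

theorem ShortExact.dim_right_lt (h : ShortExact A X C) (hA : A.dimVec ≠ 0) : C.dim < X.dim := by
  have := mt dim_eq_zero_iff.1 hA
  have := h.dim_eq
  lia

/-- A family of subspaces stable under the arrows, that is, a subrepresentation. -/
def IsInvariant (X : LinRep k Q) (U : ∀ i, Submodule k (X.obj i)) : Prop :=
  ∀ x, U (Q.src x) ≤ (U (Q.tgt x)).comap (X.map x)

/-- The subrepresentation on an invariant family of subspaces. -/
def sub (X : LinRep k Q) (U : ∀ i, Submodule k (X.obj i)) (hU : X.IsInvariant U) :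
    LinRep k Q where
  obj i := U i
  map x := (X.map x).restrict (hU x)

/-- The quotient by an invariant family of subspaces. -/
def quot (X : LinRep k Q) (U : ∀ i, Submodule k (X.obj i)) (hU : X.IsInvariant U) :
    LinRep k Q where
  obj i := X.obj i ⧸ U i
  map x := (U (Q.src x)).mapQ (U (Q.tgt x)) (X.map x) (hU x)

theorem IsHom.isInvariant_ker {f : VertexMaps X Y} (hf : IsHom f) :
    X.IsInvariant fun i => LinearMap.ker (f i) := fun x v (hv : f _ v = 0) =>
  (hf.apply_map x v).trans (by rw [hv, map_zero])

theorem IsHom.isInvariant_range {f : VertexMaps X Y} (hf : IsHom f) :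
    Y.IsInvariant fun i => LinearMap.range (f i) := by
  rintro x _ ⟨v, rfl⟩
  exact ⟨X.map x v, hf.apply_map x v⟩

theorem IsQuot.exists_shortExact : IsQuot X C → ∃ A, ShortExact A X C
  | ⟨g, hg, hsurj⟩ => ⟨X.sub _ hg.isInvariant_ker, fun _ => Submodule.subtype _, g,
      fun _ => rfl, hg, fun _ => Submodule.subtype_injective _, hsurj,
      fun i => LinearMap.exact_subtype_ker_map (g i)⟩

theorem IsSub.exists_shortExact : IsSub A X → ∃ C, ShortExact A X C
  | ⟨f, hf, hinj⟩ => ⟨X.quot _ hf.isInvariant_range, f, fun _ => Submodule.mkQ _,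
      hf, fun _ => rfl, hinj, fun _ => Submodule.mkQ_surjective _,
      fun i => LinearMap.exact_map_mkQ_range (f i)⟩

theorem isSub_sub {U : ∀ i, Submodule k (X.obj i)} (hU : X.IsInvariant U) :
    IsSub (X.sub U hU) X :=
  ⟨fun _ => Submodule.subtype _, fun _ => rfl, fun _ => Submodule.subtype_injective _⟩

theorem IsHom.shortExact_ker_range {f : VertexMaps X Y} (hf : IsHom f) :
    ShortExact (X.sub _ hf.isInvariant_ker) X (Y.sub _ hf.isInvariant_range) := by
  refine ⟨fun _ => Submodule.subtype _, fun i => (f i).rangeRestrict, fun _ => rfl, fun x => ?_,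
    fun _ => Submodule.subtype_injective _, fun i => (f i).surjective_rangeRestrict, fun i => ?_⟩
  · ext v
    exact Subtype.ext (hf.apply_map x v)
  · have : Exact (LinearMap.ker (f i)).subtype (f i).rangeRestrict := by
      rw [LinearMap.exact_iff, (f i).ker_rangeRestrict, Submodule.range_subtype]
    exact this

theorem exists_image_of_not_homVanish (h : ¬HomVanish X Y) :
    ∃ I, IsQuot X I ∧ IsSub I Y ∧ I.dimVec ≠ 0 := by
  obtain ⟨f, hf, hne⟩ : ∃ f : VertexMaps X Y, IsHom f ∧ f ≠ 0 := by
    simpa [homVanish_iff] using h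
  refine ⟨_, hf.shortExact_ker_range.isQuot, isSub_sub hf.isInvariant_range, fun hI => hne ?_⟩
  ext i v
  have : Subsingleton (LinearMap.range (f i)) := dimVec_eq_zero_iff.1 hI i
  exact congr_arg Subtype.val (Subsingleton.elim ((f i).rangeRestrict v) 0)

theorem HomVanish.dimVec_eq_zero_of_isSub (h : HomVanish X Y) : IsSub X Y → X.dimVec = 0
  | ⟨f, hf, hinj⟩ => by
    have hzero := homVanish_iff.1 h f hf
    exact dimVec_eq_zero_iff.2 fun i => ⟨fun v w => hinj i (by simp [hzero])⟩

theorem HomVanish.dimVec_eq_zero_of_isQuot (h : HomVanish X Y) : IsQuot X Y → Y.dimVec = 0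
  | ⟨f, hf, hsurj⟩ => by
    have hzero := homVanish_iff.1 h f hf
    refine dimVec_eq_zero_iff.2 fun i => subsingleton_of_forall_eq 0 fun w => ?_
    obtain ⟨v, rfl⟩ := hsurj i w
    simp [hzero]

theorem HomVanish.of_isSub_right (h : HomVanish X Y) : IsSub A Y → HomVanish X A
  | ⟨f, hf, hinj⟩ => homVanish_iff.2 fun g hg => by
    have hzero := homVanish_iff.1 h _ (hf.comp hg)
    ext i v
    exact hinj i (by simpa using LinearMap.congr_fun (congr_fun hzero i) v)

/-! ### Extensions along short exact sequences -/

theorem ExtVanish.of_isSub_left (h : ExtVanish X Y) : IsSub A X → ExtVanish A Y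
  | ⟨f, hf, hinj⟩ => fun φ => by
    choose ψ hψ using fun x => exists_comp_eq_of_injective (hinj (Q.src x)) (φ x)
    obtain ⟨g, rfl⟩ := h ψ
    exact ⟨_, (coboundary_comp_isHom g hf).trans (funext hψ)⟩

theorem ExtVanish.of_isQuot_right (h : ExtVanish X Y) : IsQuot Y C → ExtVanish X C
  | ⟨f, hf, hsurj⟩ => fun φ => by
    choose ψ hψ using fun x => Module.projective_lifting_property (f _) (φ x) (hsurj (Q.tgt x))
    obtain ⟨g, rfl⟩ := h ψ
    exact ⟨_, (coboundary_isHom_comp hf g).trans (funext hψ)⟩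

theorem ExtVanish.of_shortExact_left (hex : ShortExact A X C) (hA : ExtVanish A Y)
    (hC : ExtVanish C Y) : ExtVanish X Y := by
  obtain ⟨f, g, h⟩ := hex
  intro φ
  obtain ⟨a, ha⟩ := hA fun x => φ x ∘ₗ f (Q.src x)
  choose b hb using fun i => exists_comp_eq_of_injective (h.injective i) (a i)
  have hφb : ∀ x, (φ x - coboundary X Y b x) ∘ₗ f (Q.src x) = 0 := fun x => by
    have := congr_fun (coboundary_comp_isHom b h.isHom_left) x
    simp_rw [hb, ha] at this
    rw [LinearMap.sub_comp, this, sub_self]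
  choose ψ hψ using fun x =>
    exists_comp_eq_of_exact_of_surjective (h.surjective _) (h.exact _) (hφb x)
  obtain ⟨c, rfl⟩ := hC ψ
  refine ⟨(fun i => c i ∘ₗ g i) + b, ?_⟩
  rw [map_add, coboundary_comp_isHom c h.isHom_right, funext hψ]
  ext x : 1
  simp

theorem ExtVanish.of_shortExact_right (hex : ShortExact A Y C) (hA : ExtVanish X A)
    (hC : ExtVanish X C) : ExtVanish X Y := by
  obtain ⟨f, g, h⟩ := hex
  intro φ
  obtain ⟨c, hc⟩ := hC fun x => g (Q.tgt x) ∘ₗ φ x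
  choose b hb using fun i => Module.projective_lifting_property (g i) (c i) (h.surjective i)
  have hφb : ∀ x, g (Q.tgt x) ∘ₗ (φ x - coboundary X Y b x) = 0 := fun x => by
    have := congr_fun (coboundary_isHom_comp h.isHom_right b) x
    simp_rw [hb, hc] at this
    rw [LinearMap.comp_sub, this, sub_self]
  choose ψ hψ using fun x =>
    exists_comp_eq_of_exact_of_injective (h.injective _) (h.exact _) (hφb x)
  obtain ⟨a, rfl⟩ := hA ψ
  refine ⟨(fun i => f i ∘ₗ a i) + b, ?_⟩
  rw [map_add, coboundary_isHom_comp h.isHom_left a, funext hψ]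
  ext x : 1
  simp

theorem ExtVanish.exists_retraction {f : VertexMaps A X} {g : VertexMaps X C}
    (h : IsShortExact f g) (hext : ExtVanish C A) :
    ∃ r : VertexMaps X A, IsHom r ∧ ∀ i, r i ∘ₗ f i = LinearMap.id := by
  choose r hr using fun i => exists_comp_eq_of_injective (h.injective i) (LinearMap.id (R := k))
  have hrf : ∀ x, coboundary X A r x ∘ₗ f (Q.src x) = 0 := fun x => by
    have := congr_fun (coboundary_comp_isHom r h.isHom_left) x
    simp_rw [hr, coboundary_eq_zero_iff.2 isHom_id] at this
    exact this.symm
  choose ψ hψ using fun x =>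
    exists_comp_eq_of_exact_of_surjective (h.surjective _) (h.exact _) (hrf x)
  obtain ⟨s, rfl⟩ := hext ψ
  refine ⟨r - fun i => s i ∘ₗ g i, ?_, fun i => ?_⟩
  · rw [← coboundary_eq_zero_iff, map_sub, coboundary_comp_isHom s h.isHom_right, funext hψ,
      sub_self]
  · rw [Pi.sub_apply, LinearMap.sub_comp, LinearMap.comp_assoc,
      (h.exact i).linearMap_comp_eq_zero, LinearMap.comp_zero, sub_zero, hr]

/-! ### The torsion pair of a weight -/

/-- `X` satisfies King's inequality `⟨d, L⟩ ≤ 0` for all subrepresentations `L`. -/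
def IsTorsionFree (d : Fin Q.n → ℤ) (X : LinRep k Q) : Prop :=
  ∀ L, IsSub L X → Q.euler d L.dimVec ≤ 0

/-- `⟨d, C⟩` is positive for all nonzero quotients `C` of `X`. With `IsTorsionFree d` this forms a
torsion pair. -/
def IsTorsion (d : Fin Q.n → ℤ) (X : LinRep k Q) : Prop :=
  ∀ C, IsQuot X C → C.dimVec ≠ 0 → 0 < Q.euler d C.dimVec

/-- `X` is `⟨d, -⟩`-semi-stable. -/
def IsSemistable (d : Fin Q.n → ℤ) (X : LinRep k Q) : Prop :=
  Q.euler d X.dimVec = 0 ∧ IsTorsionFree d X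

variable {d : Fin Q.n → ℤ}

theorem IsTorsionFree.of_isSub (hX : IsTorsionFree d X) (h : IsSub A X) : IsTorsionFree d A :=
  fun _ hL => hX _ (hL.trans h)

theorem IsTorsion.of_isQuot (hX : IsTorsion d X) (h : IsQuot X C) : IsTorsion d C :=
  fun _ hC => hX _ (h.trans hC)

theorem IsTorsion.dimVec_eq_zero (hX : IsTorsion d X) (h : Q.euler d X.dimVec ≤ 0) :
    X.dimVec = 0 :=
  by_contra fun hne => (hX X (.refl X) hne).not_ge h

theorem IsTorsionFree.of_dimVec_eq_zero (hX : X.dimVec = 0) : IsTorsionFree d X := fun L hL => by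
  rw [le_antisymm (hX ▸ hL.dimVec_le) L.dimVec_nonneg, FinQuiver.euler_zero_right]

theorem IsSemistable.of_dimVec_eq_zero (hX : X.dimVec = 0) : IsSemistable d X :=
  ⟨by rw [hX, FinQuiver.euler_zero_right], .of_dimVec_eq_zero hX⟩

theorem ShortExact.exists_isSub_left_isSub_right (h : ShortExact A X C) {L : LinRep k Q}
    (hL : IsSub L X) : ∃ K I, ShortExact K L I ∧ IsSub K A ∧ IsSub I C := by
  obtain ⟨f, g, h⟩ := h
  obtain ⟨j, hj, hjinj⟩ := hL
  have hgj := h.isHom_right.comp hj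
  let ι : VertexMaps (L.sub _ hgj.isInvariant_ker) L := fun _ => Submodule.subtype _
  have hι : IsHom ι := fun _ => rfl
  have hgjι : ∀ i, g i ∘ₗ j i ∘ₗ ι i = 0 := fun i => LinearMap.ext fun v => v.2
  choose l hl using fun i =>
    exists_comp_eq_of_exact_of_injective (h.injective i) (h.exact i) (hgjι i)
  refine ⟨_, _, hgj.shortExact_ker_range, ⟨l, ?_, fun i => ?_⟩, isSub_sub hgj.isInvariant_range⟩
  · refine h.isHom_left.of_comp_injective h.injective ?_
    simpa only [hl] using hj.comp hι
  · refine Injective.of_comp (f := f i) ?_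
    rw [← LinearMap.coe_comp, hl]
    exact (hjinj i).comp (Submodule.subtype_injective _)

theorem IsTorsionFree.of_shortExact (h : ShortExact A X C) (hA : IsTorsionFree d A)
    (hC : IsTorsionFree d C) : IsTorsionFree d X := fun L hL => by
  obtain ⟨K, I, hKLI, hKA, hIC⟩ := h.exists_isSub_left_isSub_right hL
  rw [hKLI.euler_right]
  exact add_nonpos (hA K hKA) (hC I hIC)

theorem IsSemistable.of_shortExact (h : ShortExact A X C) (hA : IsSemistable d A)
    (hC : IsSemistable d C) : IsSemistable d X :=
  ⟨by rw [h.euler_right, hA.1, hC.1, add_zero], .of_shortExact h hA.2 hC.2⟩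

theorem IsSemistable.euler_quot_nonneg (hX : IsSemistable d X) (h : IsQuot X C) :
    0 ≤ Q.euler d C.dimVec := by
  obtain ⟨K, hK⟩ := h.exists_shortExact
  linarith [hX.1, hX.2 K hK.isSub, hK.euler_right d]

theorem ShortExact.exists_preimage (h : ShortExact A X C) {L : LinRep k Q} (hL : IsSub L C) :
    ∃ P, IsSub P X ∧ P.dimVec = A.dimVec + L.dimVec := by
  obtain ⟨D, hD⟩ := hL.exists_shortExact
  obtain ⟨P, hP⟩ := (h.isQuot.trans hD.isQuot).exists_shortExact
  refine ⟨P, hP.isSub, ?_⟩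
  linear_combination h.dimVec_eq + hD.dimVec_eq - hP.dimVec_eq

theorem exists_isSub_forall_le (X : LinRep k Q) (w : (Fin Q.n → ℤ) → ℤ) :
    ∃ U, IsSub U X ∧ ∀ L, IsSub L X → w L.dimVec ≤ w U.dimVec := by
  let S := {v | ∃ L, IsSub L X ∧ L.dimVec = v}
  have hS : S.Finite := (Set.finite_Icc 0 X.dimVec).subset <| by
    rintro _ ⟨L, hL, rfl⟩
    exact ⟨L.dimVec_nonneg, hL.dimVec_le⟩
  obtain ⟨_, ⟨U, hU, rfl⟩, hmax⟩ := S.exists_max_image w hS ⟨_, X, .refl X, rfl⟩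
  exact ⟨U, hU, fun L hL => hmax _ ⟨L, hL, rfl⟩⟩

/-- The torsion part is the smallest subrepresentation `U` with `⟨d, U⟩` maximal; the weight
`w` below compares the two quantities lexicographically. -/
theorem exists_isTorsion_isTorsionFree (d : Fin Q.n → ℤ) (X : LinRep k Q) :
    ∃ U C, ShortExact U X C ∧ IsTorsion d U ∧ IsTorsionFree d C := by
  let w (v : Fin Q.n → ℤ) : ℤ := (X.dim + 1) * Q.euler d v - ∑ i, v i
  have w_add (u v) : w (u + v) = w u + w v := by
    simp only [w, FinQuiver.euler_add_right, Pi.add_apply, Finset.sum_add_distrib]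
    ring
  obtain ⟨U, hU, hmax⟩ := X.exists_isSub_forall_le w
  obtain ⟨C, hC⟩ := hU.exists_shortExact
  refine ⟨U, C, hC, fun D hD hne => ?_, fun L hL => ?_⟩
  · obtain ⟨K, hK⟩ := hD.exists_shortExact
    have hw : 0 ≤ w D.dimVec := by
      have := hmax K (hK.isSub.trans hU)
      rw [hK.dimVec_eq, w_add] at this
      linarith
    have hdim : 0 < D.dim := Nat.pos_of_ne_zero (mt dim_eq_zero_iff.1 hne)
    simp only [w, ← natCast_dim] at hw
    by_contra! hle
    nlinarith
  · obtain ⟨P, hP, hPeq⟩ := hC.exists_preimage hL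
    have hw : w L.dimVec ≤ 0 := by
      have := hmax P hP
      rw [hPeq, w_add] at this
      linarith
    have hdim : L.dim ≤ X.dim := by
      have := hC.dim_eq
      obtain ⟨D, hD⟩ := hL.exists_shortExact
      have := hD.dim_eq
      lia
    simp only [w, ← natCast_dim] at hw
    by_contra! hlt
    nlinarith

theorem isTorsionFree_of_euler_nonpos
    (h : ∀ U C, ShortExact U X C → IsTorsion d U → IsTorsionFree d C → Q.euler d U.dimVec ≤ 0) :
    IsTorsionFree d X := by
  obtain ⟨U, C, hex, hU, hC⟩ := exists_isTorsion_isTorsionFree d X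
  exact .of_shortExact hex (.of_dimVec_eq_zero (hU.dimVec_eq_zero (h U C hex hU hC))) hC

/-! ### Vanishing of extensions across the torsion pair of a radical vector -/

variable {δ : Fin Q.n → ℤ} {M N : LinRep k Q}

theorem IsTorsionFree.of_extVanish (hδ : Q.IsRadical δ) (hN : N.dimVec = δ) (h : ExtVanish X N) :
    IsTorsionFree δ X := fun L hL => by
  have := (h.of_isSub_left hL).euler_nonneg
  rw [hN, hδ] at this
  linarith

/-- A torsion representation is, up to representations of dimension vector `0`, an iterated
extension of quotients of `N`. -/
theorem IsTorsion.extVanish (hN : N.dimVec = δ) (hXN : ExtVanish X N) (hY : IsTorsion δ Y) :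
    ExtVanish X Y := by
  induction hn : Y.dim using Nat.strong_induction_on generalizing Y with
  | _ n ih =>
    subst hn
    by_cases hNY : HomVanish N Y
    · exact .of_dimVec_right_eq_zero (hY.dimVec_eq_zero (hN ▸ hNY.euler_nonpos))
    · obtain ⟨I, hNI, hIY, hI⟩ := exists_image_of_not_homVanish hNY
      obtain ⟨C, hC⟩ := hIY.exists_shortExact
      exact .of_shortExact_right hC (hXN.of_isQuot_right hNI)
        (ih C.dim (hC.dim_right_lt hI) (hY.of_isQuot hC.isQuot) rfl)

theorem IsTorsionFree.extVanish (hδ : Q.IsRadical δ) (hM : M.dimVec = δ) (hN : N.dimVec = δ)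
    (hMN : ExtVanish M N) (hX : IsTorsionFree δ X) (hY : IsTorsion δ Y) : ExtVanish X Y := by
  induction hn : X.dim using Nat.strong_induction_on generalizing X with
  | _ n ih =>
    subst hn
    by_cases hXM : HomVanish X M
    · refine hY.extVanish hM (hXM.extVanish ?_)
      rw [hM, hδ]
      linarith [hX X (.refl X)]
    · obtain ⟨I, hXI, hIM, hI⟩ := exists_image_of_not_homVanish hXM
      obtain ⟨K, hK⟩ := hXI.exists_shortExact
      exact .of_shortExact_left hK (ih K.dim (hK.dim_left_lt hI) (hX.of_isSub hK.isSub) rfl)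
        (hY.extVanish hN (hMN.of_isSub_left hIM))

/-- Rigidity turns the inequality `⟨K, W⟩ = ⟨K, V⟩ ≤ 0` for a subrepresentation `K` of `V` into
`Hom(K, V) = 0`; a `K ≠ 0` therefore maps nontrivially to `W`. -/
theorem IsTorsionFree.of_rigid {V W : LinRep k Q} (hV : ExtVanish V V) (hVW : V.dimVec = W.dimVec)
    (hW : IsTorsionFree d W) : IsTorsionFree d V := fun K hKV => by
  induction hn : K.dim using Nat.strong_induction_on generalizing K with
  | _ n ih =>
    subst hn
    by_cases hKW : HomVanish K W
    · have hhom : HomVanish K V :=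
        (hV.of_isSub_left hKV).homVanish (hVW ▸ hKW.euler_nonpos)
      rw [hhom.dimVec_eq_zero_of_isSub hKV, FinQuiver.euler_zero_right]
    · obtain ⟨I, hKI, hIW, hI⟩ := exists_image_of_not_homVanish hKW
      obtain ⟨L, hL⟩ := hKI.exists_shortExact
      rw [hL.euler_right]
      exact add_nonpos (ih L.dim (hL.dim_left_lt hI) L (hL.isSub.trans hKV) rfl) (hW I hIW)

/-! ### Regular representations -/

/-- `X` is indecomposable: nonzero without nontrivial idempotent endomorphisms. -/
def Indec (X : LinRep k Q) : Prop :=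
  X.dimVec ≠ 0 ∧ ∀ e : VertexMaps X X, IsHom e → (∀ i, e i ∘ₗ e i = e i) →
    e = 0 ∨ e = fun _ => LinearMap.id

/-- `L` is a direct summand of `X`. -/
def IsSummand (L X : LinRep k Q) : Prop :=
  ∃ (f : VertexMaps L X) (g : VertexMaps X L), IsHom f ∧ IsHom g ∧ ∀ i, g i ∘ₗ f i = LinearMap.id

/-- Every indecomposable summand of `X` pairs to zero with `δ`. -/
def IsRegular (δ : Fin Q.n → ℤ) (X : LinRep k Q) : Prop :=
  ∀ L, IsSummand L X → Indec L → Q.euler δ L.dimVec = 0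

theorem IsSummand.refl (X : LinRep k Q) : IsSummand X X :=
  ⟨_, _, isHom_id, isHom_id, fun _ => rfl⟩

theorem IsSummand.trans : IsSummand A B → IsSummand B C → IsSummand A C
  | ⟨f, g, hf, hg, h⟩, ⟨f', g', hf', hg', h'⟩ =>
    ⟨_, _, hf'.comp hf, hg.comp hg', fun i => by
      rw [LinearMap.comp_assoc, ← LinearMap.comp_assoc (f i), h', LinearMap.id_comp, h]⟩

theorem IsSummand.isSub : IsSummand A X → IsSub A X
  | ⟨f, _, hf, _, h⟩ => ⟨f, hf, fun i => LeftInverse.injective (LinearMap.congr_fun (h i))⟩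

theorem IsSummand.isQuot : IsSummand A X → IsQuot X A
  | ⟨_, g, _, hg, h⟩ => ⟨g, hg, fun i => RightInverse.surjective (LinearMap.congr_fun (h i))⟩

theorem Indec.dimVec_eq_zero_or_dimVec_eq_zero (hX : Indec X) (hex : ShortExact A X C)
    (hext : ExtVanish C A) : A.dimVec = 0 ∨ C.dimVec = 0 := by
  obtain ⟨f, g, h⟩ := hex
  obtain ⟨r, hr, hrf⟩ := hext.exists_retraction h
  have hrf' : ∀ i v, r i (f i v) = v := fun i => LinearMap.congr_fun (hrf i)
  obtain he | he := hX.2 (fun i => f i ∘ₗ r i) (h.isHom_left.comp hr) fun i => by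
    ext v
    simp [hrf']
  · refine .inl (dimVec_eq_zero_iff.2 fun i => subsingleton_of_forall_eq 0 fun v => ?_)
    have := LinearMap.congr_fun (congr_fun he i) (f i v)
    exact h.injective i (by simpa [hrf'] using this)
  · refine .inr (dimVec_eq_zero_iff.2 fun i => subsingleton_of_forall_eq 0 fun w => ?_)
    obtain ⟨v, rfl⟩ := h.surjective i w
    exact (h.exact i v).2 ⟨r i v, LinearMap.congr_fun (congr_fun he i) v⟩

theorem isSummand_range {e : VertexMaps X X} (he : IsHom e) (hidem : ∀ i, e i ∘ₗ e i = e i) :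
    IsSummand (X.sub _ he.isInvariant_range) X := by
  refine ⟨fun _ => Submodule.subtype _, fun i => (e i).rangeRestrict, fun _ => rfl, fun x => ?_,
    fun i => ?_⟩
  · ext v
    exact Subtype.ext (he.apply_map x v)
  · ext ⟨_, v, rfl⟩
    exact Subtype.ext (LinearMap.congr_fun (hidem i) v)

theorem isSummand_ker {e : VertexMaps X X} (he : IsHom e) (hidem : ∀ i, e i ∘ₗ e i = e i) :
    IsSummand (X.sub _ he.isInvariant_ker) X := by
  have hmem (i) (v : X.obj i) :
      (LinearMap.id - e i : X.obj i →ₗ[k] X.obj i) v ∈ LinearMap.ker (e i) := by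
    simpa [sub_eq_zero] using (LinearMap.congr_fun (hidem i) v).symm
  refine ⟨fun _ => Submodule.subtype _, fun i => (LinearMap.id - e i).codRestrict _ (hmem i),
    fun _ => rfl, fun x => ?_, fun i => ?_⟩
  · ext v
    exact Subtype.ext ((isHom_id.sub he).apply_map x v)
  · ext ⟨v, hv⟩
    exact Subtype.ext (sub_eq_self.2 hv)

theorem exists_shortExact_isSummand_of_not_indec (hX : X.dimVec ≠ 0) (hind : ¬Indec X) :
    ∃ A C, ShortExact A X C ∧ IsSummand A X ∧ IsSummand C X ∧ A.dimVec ≠ 0 ∧ C.dimVec ≠ 0 := by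
  obtain ⟨e, he, hidem, hne_zero, hne_id⟩ : ∃ e : VertexMaps X X, IsHom e ∧
      (∀ i, e i ∘ₗ e i = e i) ∧ e ≠ 0 ∧ e ≠ fun _ => LinearMap.id := by
    simpa [Indec, hX] using hind
  refine ⟨_, _, he.shortExact_ker_range, isSummand_ker he hidem, isSummand_range he hidem,
    fun hker => hne_id ?_, fun hrange => hne_zero ?_⟩
  · ext i v
    have : Subsingleton (LinearMap.ker (e i)) := dimVec_eq_zero_iff.1 hker i
    have hbot := Submodule.subsingleton_iff_eq_bot.1 this
    exact LinearMap.ker_eq_bot.1 hbot (LinearMap.congr_fun (hidem i) v)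
  · ext i v
    have : Subsingleton (LinearMap.range (e i)) := dimVec_eq_zero_iff.1 hrange i
    exact congr_arg Subtype.val (Subsingleton.elim ((e i).rangeRestrict v) 0)

theorem induction_on_indec_summands {P : LinRep k Q → Prop} (zero : ∀ X, X.dimVec = 0 → P X)
    (ext : ∀ {A X C}, ShortExact A X C → P A → P C → P X) (X : LinRep k Q)
    (indec : ∀ L, IsSummand L X → Indec L → P L) : P X := by
  induction hn : X.dim using Nat.strong_induction_on generalizing X with
  | _ n ih =>
    subst hn
    by_cases hzero : X.dimVec = 0
    · exact zero X hzero
    by_cases hX : Indec X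
    · exact indec X (.refl X) hX
    obtain ⟨A, C, hex, hAX, hCX, hA, hC⟩ := exists_shortExact_isSummand_of_not_indec hzero hX
    exact ext hex
      (ih A.dim (hex.dim_left_lt hC) A (fun L hL => indec L (hL.trans hAX)) rfl)
      (ih C.dim (hex.dim_right_lt hA) C (fun L hL => indec L (hL.trans hCX)) rfl)

theorem IsSemistable.isRegular (hX : IsSemistable δ X) : IsRegular δ X := fun L hL _ =>
  le_antisymm (hX.2 L hL.isSub) (hX.euler_quot_nonneg hL.isQuot)

theorem IsRegular.isSemistable (hδ : Q.IsRadical δ) (hM : M.dimVec = δ) (hN : N.dimVec = δ)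
    (hMN : ExtVanish M N) (hX : IsRegular δ X) : IsSemistable δ X := by
  refine induction_on_indec_summands (fun _ => .of_dimVec_eq_zero) .of_shortExact X
    fun L hLX hL => ?_
  have hδL := hX L hLX hL
  refine ⟨hδL, isTorsionFree_of_euler_nonpos fun U C hex hU hC => ?_⟩
  obtain h | h := hL.dimVec_eq_zero_or_dimVec_eq_zero hex (hC.extVanish hδ hM hN hMN hU)
  · rw [h, FinQuiver.euler_zero_right]
  · have := hex.euler_right δ
    rw [h, hδL, FinQuiver.euler_zero_right, add_zero] at this
    exact this.ge

/-! ### Semi-stability for the sum of a rigid weight and a radical weight -/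

section RigidAddRadical

variable {V : LinRep k Q} {s : ℤ}

theorem homVanish_of_isSemistable_add_smul (hs : 0 ≤ s) (hV : ExtVanish V V)
    (hVδ : IsSemistable δ V) (hX : IsSemistable (V.dimVec + s • δ) X) : HomVanish V X := by
  by_contra hVX
  obtain ⟨I, hVI, hIX, hI⟩ := exists_image_of_not_homVanish hVX
  have hdI := hX.2 I hIX
  rw [FinQuiver.euler_add_smul_left] at hdI
  have hδI : 0 ≤ s * Q.euler δ I.dimVec := mul_nonneg hs (hVδ.euler_quot_nonneg hVI)
  exact hI (((hV.of_isQuot_right hVI).homVanish (by linarith)).dimVec_eq_zero_of_isQuot hVI)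

theorem isTorsionFree_of_isSemistable_add_smul (hδ : Q.IsRadical δ) (hM : M.dimVec = δ)
    (hN : N.dimVec = δ) (hMN : ExtVanish M N) (hs : 0 < s) (hVδ : IsTorsionFree δ V)
    (hX : IsSemistable (V.dimVec + s • δ) X) : IsTorsionFree δ X :=
  isTorsionFree_of_euler_nonpos fun U C hex hU _ => by
    have hVU := (hVδ.extVanish hδ hM hN hMN hU).euler_nonneg
    have hdU := hX.2 U hex.isSub
    rw [FinQuiver.euler_add_smul_left] at hdU
    exact nonpos_of_mul_nonpos_right (by linarith) hs

theorem isSemistable_add_smul_iff (hδ : Q.IsRadical δ) (hM : M.dimVec = δ) (hN : N.dimVec = δ)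
    (hMN : ExtVanish M N) (hs : 0 < s) (hV : ExtVanish V V) (hVδ : IsSemistable δ V) :
    IsSemistable (V.dimVec + s • δ) X ↔ (HomVanish V X ∧ ExtVanish V X) ∧ IsSemistable δ X := by
  constructor
  · intro hX
    have hhom := homVanish_of_isSemistable_add_smul hs.le hV hVδ hX
    have hfree := isTorsionFree_of_isSemistable_add_smul hδ hM hN hMN hs hVδ.2 hX
    have hdX := hX.1
    rw [FinQuiver.euler_add_smul_left] at hdX
    have hδX : Q.euler δ X.dimVec = 0 := by
      refine le_antisymm (hfree X (.refl X)) (nonneg_of_mul_nonneg_right ?_ hs)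
      linarith [hhom.euler_nonpos]
    rw [hδX, mul_zero, add_zero] at hdX
    exact ⟨⟨hhom, hhom.extVanish hdX.ge⟩, hδX, hfree⟩
  · rintro ⟨⟨hhom, hext⟩, hδX, hfree⟩
    refine ⟨?_, fun L hL => ?_⟩
    · rw [FinQuiver.euler_add_smul_left, hδX, mul_zero, add_zero]
      exact le_antisymm hhom.euler_nonpos hext.euler_nonneg
    · rw [FinQuiver.euler_add_smul_left]
      exact add_nonpos (hhom.of_isSub_right hL).euler_nonpos
        (mul_nonpos_of_nonneg_of_nonpos hs.le (hfree L hL))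

end RigidAddRadical

/-! ### Deformation of bricks -/

/-- For a self-extension class `[ψ] ≠ 0`, the differentials of the deformations `X.map - t ψ` are
`coboundary X X + t (ψ ∘ -)`, and `ψ ∘ -` is injective from `End X = k` to `Ext¹(X, X)`. -/
theorem exists_extVanish_of_finrank_end_eq_one [Infinite k] (hX : Q.euler X.dimVec X.dimVec = 0)
    (hend : finrank k (LinearMap.ker (coboundary X X)) = 1) :
    ∃ Y : LinRep k Q, Y.dimVec = X.dimVec ∧ ExtVanish X Y := by
  have hfin : finrank k (VertexMaps X X) = finrank k (ArrowMaps X X) := by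
    have := finrank_vertexMaps_sub_finrank_arrowMaps X X
    lia
  obtain ⟨ψ, hψ⟩ : ∃ ψ, ψ ∉ LinearMap.range (coboundary X X) := by
    by_contra! hall
    have hinj := (LinearMap.injective_iff_surjective_of_finrank_eq_finrank hfin).2 hall
    rw [LinearMap.ker_eq_bot.2 hinj, finrank_bot] at hend
    exact zero_ne_one hend
  let g : VertexMaps X X →ₗ[k] ArrowMaps X X :=
    { toFun f x := ψ x ∘ₗ f (Q.src x)
      map_add' f f' := funext fun x => LinearMap.comp_add _ _ _
      map_smul' c f := funext fun x => LinearMap.comp_smul _ _ _ }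
  obtain ⟨t, ht⟩ := exists_injective_add_smul hfin (coboundary X X) g fun f hf hgf => by
    by_contra hne
    have hne' : (⟨f, hf⟩ : LinearMap.ker (coboundary X X)) ≠ 0 :=
      fun h => hne (congr_arg Subtype.val h)
    obtain ⟨c, hc⟩ := (finrank_eq_one_iff_of_nonzero' _ hne').1 hend
      ⟨fun _ => LinearMap.id, coboundary_eq_zero_iff.2 isHom_id⟩
    have hψf : ψ = c • g f := by
      have hid : c • f = fun _ => LinearMap.id := congr_arg Subtype.val hc
      rw [← map_smul, hid]
      rfl
    exact hψ (hψf ▸ Submodule.smul_mem _ c hgf)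
  let Y : LinRep k Q := { X with map := X.map - t • ψ }
  refine ⟨Y, rfl, (LinearMap.injective_iff_surjective_of_finrank_eq_finrank hfin).1 ?_⟩
  have hY : coboundary X Y = coboundary X X + t • g := by
    ext f x v
    simp [coboundary, Y, g, sub_add]
  exact hY ▸ ht

/-! ### Direct sums -/

/-- The direct sum. -/
def prod (X Y : LinRep k Q) : LinRep k Q where
  obj i := X.obj i × Y.obj i
  map x := (X.map x).prodMap (Y.map x)

theorem shortExact_prod (X Y : LinRep k Q) : ShortExact X (X.prod Y) Y := by
  refine ⟨fun _ => LinearMap.inl k _ _, fun _ => LinearMap.snd k _ _, fun x => ?_, fun _ => rfl,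
    fun _ => LinearMap.inl_injective, fun _ => LinearMap.snd_surjective, fun _ => Exact.inl_snd⟩
  ext v
  exact Prod.ext rfl (Y.map x).map_zero.symm

theorem exists_isSemistable_dimVec_eq_sum {l : List (Fin Q.n → ℤ)}
    (hl : ∀ α ∈ l, ∃ X : LinRep k Q, X.dimVec = α ∧ IsSemistable d X) :
    ∃ X : LinRep k Q, X.dimVec = l.sum ∧ IsSemistable d X := by
  induction l with
  | nil =>
    have hzero : dimVec (⟨fun _ => PUnit, fun _ => 0⟩ : LinRep k Q) = 0 :=
      dimVec_eq_zero_iff.2 fun _ => inferInstanceAs (Subsingleton PUnit)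
    exact ⟨_, hzero, .of_dimVec_eq_zero hzero⟩
  | cons α l ih =>
    obtain ⟨X, hX, hXd⟩ := hl α List.mem_cons_self
    obtain ⟨Y, hY, hYd⟩ := ih fun β hβ => hl β (List.mem_cons_of_mem α hβ)
    refine ⟨X.prod Y, ?_, .of_shortExact (shortExact_prod X Y) hXd hYd⟩
    rw [(shortExact_prod X Y).dimVec_eq, hX, hY, List.sum_cons]

/-! ### Isomorphisms -/

/-- `X` and `Y` are isomorphic. -/
def IsIso (X Y : LinRep k Q) : Prop :=
  ∃ e : ∀ i, X.obj i ≃ₗ[k] Y.obj i, IsHom fun i => (e i).toLinearMap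

theorem IsHom.symm {e : ∀ i, X.obj i ≃ₗ[k] Y.obj i} (he : IsHom fun i => (e i).toLinearMap) :
    IsHom fun i => (e i).symm.toLinearMap := fun x => by
  ext w
  simpa [LinearEquiv.symm_apply_eq] using (he.apply_map x ((e _).symm w)).symm

theorem IsIso.symm : IsIso X Y → IsIso Y X
  | ⟨_, he⟩ => ⟨_, he.symm⟩

theorem IsIso.dimVec_eq : IsIso X Y → X.dimVec = Y.dimVec
  | ⟨e, _⟩ => funext fun i => congr_arg _ (e i).finrank_eq

theorem IsIso.isSummand : IsIso X Y → IsSummand X Y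
  | ⟨e, he⟩ => ⟨_, _, he, he.symm, fun i => (e i).symm_comp⟩

theorem IsIso.indec (h : IsIso X Y) (hX : Indec X) : Indec Y := by
  refine ⟨h.dimVec_eq ▸ hX.1, fun a ha haa => ?_⟩
  obtain ⟨e, he⟩ := h
  have hconj : IsHom fun i => (e i).symm.conj (a i) := (he.symm.comp ha).comp he
  refine (hX.2 _ hconj fun i => by rw [← LinearEquiv.conj_comp, haa]).imp
    (fun h => funext fun i => (e i).symm.conj.injective ?_)
    (fun h => funext fun i => (e i).symm.conj.injective ?_)
  · simpa using congr_fun h i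
  · simpa using congr_fun h i

end LinRep

namespace QRep

open LinRep

variable {k : Type} [Field k] {Q : FinQuiver} {L M N : QRep k Q}

/-- The representation on the coordinate spaces given by the matrices of `M`. -/
def toLinRep (M : QRep k Q) : LinRep k Q where
  obj i := Fin (M.d i) → k
  map x := (M.mat x).toLin'

@[simp]
theorem dimVec_toLinRep (M : QRep k Q) : M.toLinRep.dimVec = M.dimVec := by
  simp [funext_iff, LinRep.dimVec, dimVec, toLinRep]

/-- The correspondence between families of matrices and families of linear maps. -/
def toVertexMaps (M N : QRep k Q) :
    (∀ i, Matrix (Fin (N.d i)) (Fin (M.d i)) k) ≃ₗ[k] VertexMaps M.toLinRep N.toLinRep :=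
  LinearEquiv.piCongrRight fun _ => Matrix.toLin'

/-- The correspondence between families of matrices and families of linear maps. -/
def toArrowMaps (M N : QRep k Q) :
    (∀ x, Matrix (Fin (N.d (Q.tgt x))) (Fin (M.d (Q.src x))) k) ≃ₗ[k]
      ArrowMaps M.toLinRep N.toLinRep :=
  LinearEquiv.piCongrRight fun _ => Matrix.toLin'

theorem exists_isIso_toLinRep (X : LinRep k Q) : ∃ M : QRep k Q, LinRep.IsIso X M.toLinRep := by
  let e (i) : X.obj i ≃ₗ[k] (Fin (finrank k (X.obj i)) → k) := (finBasis k (X.obj i)).equivFun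
  let M : QRep k Q := ⟨fun i => finrank k (X.obj i), fun x => LinearMap.toMatrix'
    ((e (Q.tgt x)).toLinearMap ∘ₗ X.map x ∘ₗ (e (Q.src x)).symm.toLinearMap)⟩
  refine ⟨M, e, fun x => ?_⟩
  have hmap : M.toLinRep.map x = (e _).toLinearMap ∘ₗ X.map x ∘ₗ (e _).symm.toLinearMap :=
    toLin'_toMatrix' _
  ext v
  rw [hmap]
  exact congr_arg (fun w => e _ (X.map x w)) ((e _).symm_apply_apply v).symm

theorem coboundary_toVertexMaps (f : ∀ i, Matrix (Fin (N.d i)) (Fin (M.d i)) k) :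
    coboundary M.toLinRep N.toLinRep (toVertexMaps M N f) = toArrowMaps M N (extMap M N f) := by
  ext1 x
  change (f (Q.tgt x)).toLin' ∘ₗ (M.mat x).toLin' - (N.mat x).toLin' ∘ₗ (f (Q.src x)).toLin' =
    (f (Q.tgt x) * M.mat x - N.mat x * f (Q.src x)).toLin'
  rw [map_sub, Matrix.toLin'_mul, Matrix.toLin'_mul]

theorem isHom_toVertexMaps_iff {f : ∀ i, Matrix (Fin (N.d i)) (Fin (M.d i)) k} :
    IsHom (toVertexMaps M N f) ↔ f ∈ homSpace M N := by
  rw [← coboundary_eq_zero_iff, coboundary_toVertexMaps, LinearEquiv.map_eq_zero_iff]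
  simp [funext_iff, extMap, sub_eq_zero, homSpace]

theorem homDim_eq (M N : QRep k Q) :
    homDim M N = finrank k (LinearMap.ker (coboundary M.toLinRep N.toLinRep)) := by
  have : (homSpace M N).map (toVertexMaps M N).toLinearMap =
      LinearMap.ker (coboundary M.toLinRep N.toLinRep) := by
    ext f
    obtain ⟨f, rfl⟩ := (toVertexMaps M N).surjective f
    simp [coboundary_eq_zero_iff, isHom_toVertexMaps_iff]
  rw [← this, LinearEquiv.finrank_map_eq, homDim]

theorem homDim_eq_zero_iff : homDim M N = 0 ↔ HomVanish M.toLinRep N.toLinRep := by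
  rw [homDim_eq, Submodule.finrank_eq_zero, LinearMap.ker_eq_bot, HomVanish]

theorem extDim_eq_zero_iff : extDim M N = 0 ↔ ExtVanish M.toLinRep N.toLinRep := by
  have hcomm : coboundary M.toLinRep N.toLinRep ∘ toVertexMaps M N =
      toArrowMaps M N ∘ extMap M N := funext coboundary_toVertexMaps
  rw [extDim, finrank_zero_iff, Submodule.Quotient.subsingleton_iff,
    LinearMap.range_eq_top, ExtVanish, ← EquivLike.surjective_comp (toVertexMaps M N), hcomm,
    EquivLike.comp_surjective]

theorem rPerp_iff {V : QRep k Q} :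
    RPerp V M ↔ HomVanish V.toLinRep M.toLinRep ∧ ExtVanish V.toLinRep M.toLinRep :=
  and_congr homDim_eq_zero_iff extDim_eq_zero_iff

theorem isSubrep_iff : IsSubrep L M ↔ IsSub L.toLinRep M.toLinRep :=
  (toVertexMaps L M).toEquiv.exists_congr fun _ => and_congr_left' isHom_toVertexMaps_iff.symm

theorem isSummand_iff : QRep.IsSummand L M ↔ LinRep.IsSummand L.toLinRep M.toLinRep := by
  constructor
  · rintro ⟨f, hf, g, hg, hgf⟩
    refine ⟨_, _, isHom_toVertexMaps_iff.2 hf, isHom_toVertexMaps_iff.2 hg, fun i => ?_⟩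
    exact (toLin'_mul _ _).symm.trans ((congr_arg _ (hgf i)).trans toLin'_one)
  · rintro ⟨f, g, hf, hg, hgf⟩
    obtain ⟨f, rfl⟩ := (toVertexMaps L M).surjective f
    obtain ⟨g, rfl⟩ := (toVertexMaps M L).surjective g
    refine ⟨f, isHom_toVertexMaps_iff.1 hf, g, isHom_toVertexMaps_iff.1 hg, fun i => ?_⟩
    exact toLin'.injective ((toLin'_mul _ _).trans ((hgf i).trans toLin'_one.symm))

theorem indec_iff : QRep.Indec M ↔ LinRep.Indec M.toLinRep := by
  refine and_congr ?_ ((toVertexMaps M M).toEquiv.forall_congr fun f => ?_)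
  · simp [funext_iff, dimVec]
  · refine imp_congr isHom_toVertexMaps_iff.symm (imp_congr (forall_congr' fun i => ?_) ?_)
    · exact toLin'.injective.eq_iff.symm.trans (by rw [toLin'_mul]; rfl)
    · refine or_congr (toVertexMaps M M).map_eq_zero_iff.symm ?_
      rw [← (toVertexMaps M M).injective.eq_iff]
      exact Eq.congr_right (funext fun i => toLin'_one)

theorem semiStable_iff {d : Fin Q.n → ℤ} : SemiStable d M ↔ IsSemistable d M.toLinRep := by
  refine and_congr (by rw [dimVec_toLinRep]) ⟨fun h X hX => ?_, fun h L hL => ?_⟩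
  · obtain ⟨L, hL⟩ := exists_isIso_toLinRep X
    rw [hL.dimVec_eq, dimVec_toLinRep]
    exact h L (isSubrep_iff.2 (hL.symm.isSummand.isSub.trans hX))
  · rw [← dimVec_toLinRep]
    exact h _ (isSubrep_iff.1 hL)

theorem regularRep_iff {δ : Fin Q.n → ℤ} : RegularRep δ M ↔ IsRegular δ M.toLinRep := by
  refine ⟨fun h X hX hind => ?_, fun h L hL hind => ?_⟩
  · obtain ⟨L, hL⟩ := exists_isIso_toLinRep X
    rw [hL.dimVec_eq, dimVec_toLinRep]
    exact h L (isSummand_iff.2 (hL.symm.isSummand.trans hX)) (indec_iff.2 (hL.indec hind))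
  · rw [← dimVec_toLinRep]
    exact h _ (isSummand_iff.1 hL) (indec_iff.1 hind)

end QRep

/-! ### The canonical decomposition -/

theorem IsCanonDecomp.extZero_of_mem_append {k : Type} [Field k] {Q : FinQuiver}
    {d α β : Fin Q.n → ℤ} {l₁ l₂ : List (Fin Q.n → ℤ)} (h : IsCanonDecomp k Q d (l₁ ++ l₂))
    (hα : α ∈ l₁) (hβ : β ∈ l₂) : ExtZero k Q α β ∧ ExtZero k Q β α := by
  obtain ⟨i, hi, rfl⟩ := List.getElem_of_mem hα
  obtain ⟨j, hj, rfl⟩ := List.getElem_of_mem hβ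
  let i' : Fin (l₁ ++ l₂).length := ⟨i, by rw [List.length_append]; omega⟩
  let j' : Fin (l₁ ++ l₂).length := ⟨l₁.length + j, by rw [List.length_append]; omega⟩
  have hne : i' ≠ j' := fun hij => absurd (congr_arg Fin.val hij) (by simp only [i', j']; omega)
  have hi' : (l₁ ++ l₂).get i' = l₁[i] := List.getElem_append_left hi
  have hj' : (l₁ ++ l₂).get j' = l₂[j] := by simp [j']
  rw [← hi', ← hj']
  exact ⟨h.2.2 _ _ hne, h.2.2 _ _ hne.symm⟩

section

variable {k : Type} [Field k] {Q : FinQuiver} {δ : Fin Q.n → ℤ}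

open QRep LinRep

theorem IsSchurRoot.exists_extVanish [Infinite k] (hδ : IsSchurRoot k Q δ)
    (hδδ : Q.euler δ δ = 0) :
    ∃ M N : LinRep k Q, M.dimVec = δ ∧ N.dimVec = δ ∧ ExtVanish M N := by
  obtain ⟨M, hM, -, hend⟩ := hδ
  rw [← dimVec_toLinRep] at hM
  obtain ⟨N, hN, hMN⟩ := exists_extVanish_of_finrank_end_eq_one (X := M.toLinRep)
    (by rw [hM, hδδ]) (by rw [← homDim_eq, hend])
  exact ⟨_, N, hM, hN.trans hM, hMN⟩

theorem ExtZero.exists_extVanish {α β : Fin Q.n → ℤ} : ExtZero k Q α β →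
    ∃ X Y : LinRep k Q, X.dimVec = α ∧ Y.dimVec = β ∧ ExtVanish X Y
  | ⟨X, Y, hX, hY, hXY⟩ => ⟨X.toLinRep, Y.toLinRep, by simpa, by simpa, extDim_eq_zero_iff.1 hXY⟩

theorem exists_isSemistable_of_extZero {α : Fin Q.n → ℤ} (hδ : Q.IsRadical δ)
    (hαδ : ExtZero k Q α δ) (hδα : ExtZero k Q δ α) :
    ∃ X : LinRep k Q, X.dimVec = α ∧ IsSemistable δ X := by
  obtain ⟨X, N, hX, hN, hXN⟩ := hαδ.exists_extVanish
  obtain ⟨M, Y, hM, hY, hMY⟩ := hδα.exists_extVanish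
  have htf : IsTorsionFree δ X := .of_extVanish hδ hN hXN
  have hle : 0 ≤ Q.euler δ X.dimVec := by
    rw [hX, ← hM, ← hY]
    exact hMY.euler_nonneg
  exact ⟨X, hX, (htf X (.refl X)).antisymm hle, htf⟩

end

open QRep in
theorem semistable_with_null_root_general {k : Type} [Field k] [Infinite k] {Q : FinQuiver}
    {d δ : Fin Q.n → ℤ} (hδ : Q.IsRadical δ) {s : ℕ} (hs : 1 ≤ s)
    {roots : List (Fin Q.n → ℤ)} (hcd : IsCanonDecomp k Q d (roots ++ List.replicate s δ))
    {V : QRep k Q} (hV : extDim V V = 0) (hVd : V.dimVec = roots.sum) (M : QRep k Q) :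
    SemiStable d M ↔ RPerp V M ∧ RegularRep δ M := by
  have hmem : δ ∈ List.replicate s δ := List.mem_replicate.2 ⟨by omega, rfl⟩
  obtain ⟨B, N, hB, hN, hBN⟩ :=
    (hcd.2.1 δ (List.mem_append_right _ hmem)).exists_extVanish hδ.euler_self
  obtain ⟨W, hW, hWδ⟩ := LinRep.exists_isSemistable_dimVec_eq_sum fun α hα =>
    have h := hcd.extZero_of_mem_append hα hmem
    exists_isSemistable_of_extZero hδ h.1 h.2
  have hVV := extDim_eq_zero_iff.1 hV
  have hVW : V.toLinRep.dimVec = W.dimVec := by rw [dimVec_toLinRep, hVd, hW]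
  have hVδ : LinRep.IsSemistable δ V.toLinRep := ⟨hVW ▸ hWδ.1, .of_rigid hVV hVW hWδ.2⟩
  have hd : d = V.toLinRep.dimVec + (s : ℤ) • δ := by
    rw [← hcd.1, List.sum_append, List.sum_replicate, dimVec_toLinRep, hVd, natCast_zsmul]
  have hreg : LinRep.IsSemistable δ M.toLinRep ↔ LinRep.IsRegular δ M.toLinRep :=
    ⟨LinRep.IsSemistable.isRegular, LinRep.IsRegular.isSemistable hδ hB hN hBN⟩
  rw [semiStable_iff, rPerp_iff, regularRep_iff, ← hreg, hd]
  exact LinRep.isSemistable_add_smul_iff hδ hB hN hBN (by omega) hVV hVδ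

open QRep in
/-- if `d` has canonical decomposition `d̂ ⊕ δ^s` with `s ≥ 1`
(`d̂` a sum of real Schur roots) and `V` is the rigid general representation of
dimension vector `d̂`, then rep(Q)_d = V^⊥ ∩ Reg. -/
theorem semistable_with_null_root (k : Type) [Field k] [IsAlgClosed k]
    (Q : FinQuiver) (hQ : Q.IsEuclidean) (δ : Fin Q.n → ℤ) (hδ : Q.IsNullRoot δ)
    (s : ℕ) (hs : 1 ≤ s) (reals : List (Fin Q.n → ℤ))
    (hreals : ∀ α ∈ reals, IsSchurRoot k Q α ∧ Q.euler α α = 1)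
    (d : Fin Q.n → ℤ)
    (hcd : IsCanonDecomp k Q d (reals ++ List.replicate s δ))
    (V : QRep k Q) (hV : extDim V V = 0) (hVd : V.dimVec = reals.sum) :
    ∀ M : QRep k Q, SemiStable d M ↔ (RPerp V M ∧ RegularRep δ M) :=
  semistable_with_null_root_general (FinQuiver.isRadical_of_nonneg hQ.2.2.1 hδ.2.1) hs hcd hV hVd
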